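/- arXiv:1611.07380 — 7 statements merged into one kernel-verified Lean document; each statement's English description precedes it below -/
import Mathlib

section
/- Let W be a closure space, let μ be an infinite cardinal, and let A be a subset of the underlying set of W with |A| < μ. If W is μ-homogeneous, then the localization W_A is μ-homogeneous. -/
open Cardinal Set

universe u v

variable {X : Type u}

/-- `cl` is a closure operator: monotonicity and transitivity. -/
def IsClosure (cl : Set X → Set X) : Prop :=
  (∀ A : Set X, A ⊆ cl A) ∧ ∀ A B : Set X, A ⊆ cl B → cl A ⊆ cl B

/-- `f` is an automorphism of the closure space `(X, cl)`. -/
def IsAuto (cl : Set X → Set X) (f : X → X) : Prop :=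
  Function.Bijective f ∧ ∀ A : Set X, f '' cl A = cl (f '' A)

/-- The closure space `(X, cl)` is `μ`-homogeneous. -/
def IsHomog (cl : Set X → Set X) (μ : Cardinal.{u}) : Prop :=
  ∀ A : Set X, #A < μ → ∀ a b : X, a ∉ cl A → b ∉ cl A →
    ∃ f : X → X, IsAuto cl f ∧ (∀ x ∈ A, f x = x) ∧ f a = b

/-- The closure space `(X, cl)` has exchange over `A`. -/
def ExchOver (cl : Set X → Set X) (A : Set X) : Prop :=
  ∀ a b : X, a ∈ cl (A ∪ {b}) → a ∉ cl A → b ∈ cl (A ∪ {a})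

/-- The localization `W_A`: the closure space on `X \ A` with
`cl^{W_A}(B) = cl(A ∪ B) ∩ (X \ A)`. -/
def locCl (cl : Set X → Set X) (A : Set X) :
    Set {x : X // x ∉ A} → Set {x : X // x ∉ A} :=
  fun B => {x | (x : X) ∈ cl (A ∪ (Subtype.val '' B))}

/-- `κ(W)`: the least infinite cardinal `κ` such that whenever `a ∈ cl A` there is
`A₀ ⊆ A` with `|A₀| < κ` and `a ∈ cl A₀`. -/
noncomputable def kappaCard (cl : Set X → Set X) : Cardinal.{u} :=
  sInf {κ : Cardinal.{u} | ℵ₀ ≤ κ ∧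
    ∀ (A : Set X) (a : X), a ∈ cl A → ∃ A₀, A₀ ⊆ A ∧ #A₀ < κ ∧ a ∈ cl A₀}

/-- `LS(W)`: the least infinite cardinal `μ` such that `|cl A| ≤ |A| + μ` for all `A`. -/
noncomputable def LSCard (cl : Set X → Set X) : Cardinal.{u} :=
  sInf {μ : Cardinal.{u} | ℵ₀ ≤ μ ∧ ∀ A : Set X, #(cl A) ≤ #A + μ}

/-!
An automorphism of `W` fixing `A ∪ B` pointwise maps `A` onto itself, hence restricts to `X \ A`,
and the restriction is an automorphism of `W_A` fixing `B`. So homogeneity of `W_A` over `B` reduces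
to homogeneity of `W` over `A ∪ B`, a set that is still smaller than the infinite cardinal `μ`.
-/

section Localization

variable {cl : Set X → Set X} {A : Set X} {f : X → X}

theorem isAuto_iff_mem_cl_image_iff :
    IsAuto cl f ↔ Function.Bijective f ∧ ∀ B x, f x ∈ cl (f '' B) ↔ x ∈ cl B := by
  refine and_congr_right fun hf => forall_congr' fun B => ?_
  rw [Set.ext_iff, hf.surjective.forall]
  simp only [hf.injective.mem_set_image, Iff.comm]

theorem IsAuto.mem_cl_image_iff (hf : IsAuto cl f) {B : Set X} {x : X} :
    f x ∈ cl (f '' B) ↔ x ∈ cl B :=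
  (isAuto_iff_mem_cl_image_iff.mp hf).2 B x

theorem mem_locCl {B : Set {x : X // x ∉ A}} {x : {x : X // x ∉ A}} :
    x ∈ locCl cl A B ↔ (x : X) ∈ cl (A ∪ Subtype.val '' B) :=
  Iff.rfl

/-- The permutation of `X \ A` obtained by restricting an automorphism of `(X, cl)` that maps `A`
onto itself. It provides the automorphisms of the localization at `A`. -/
noncomputable def IsAuto.restrictCompl (hf : IsAuto cl f) (hA : f '' A = A) :
    Equiv.Perm {x : X // x ∉ A} :=
  (Equiv.ofBijective f hf.1).subtypeEquiv fun x => by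
    rw [Equiv.ofBijective_apply, ← hf.1.injective.mem_set_image, hA]

theorem IsAuto.coe_restrictCompl (hf : IsAuto cl f) (hA : f '' A = A) (x : {x : X // x ∉ A}) :
    (hf.restrictCompl hA x : X) = f x :=
  rfl

theorem IsAuto.union_image_restrictCompl (hf : IsAuto cl f) (hA : f '' A = A)
    (B : Set {x : X // x ∉ A}) :
    A ∪ Subtype.val '' (hf.restrictCompl hA '' B) = f '' (A ∪ Subtype.val '' B) := by
  simp only [image_union, hA, image_image, hf.coe_restrictCompl hA]

theorem IsAuto.isAuto_restrictCompl (hf : IsAuto cl f) (hA : f '' A = A) :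
    IsAuto (locCl cl A) (hf.restrictCompl hA) := by
  refine isAuto_iff_mem_cl_image_iff.mpr ⟨(hf.restrictCompl hA).bijective, fun B x => ?_⟩
  rw [mem_locCl, mem_locCl, hf.union_image_restrictCompl hA, hf.coe_restrictCompl hA,
    hf.mem_cl_image_iff]

end Localization

theorem stmt0_general (cl : Set X → Set X) (μ : Cardinal.{u}) (hμ : ℵ₀ ≤ μ) (A : Set X)
    (hA : #A < μ) (hhom : IsHomog cl μ) : IsHomog (locCl cl A) μ := by
  intro B hB a b ha hb
  have hAB : #(A ∪ Subtype.val '' B : Set X) < μ :=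
    (mk_union_le _ _).trans_lt (add_lt_of_lt hμ hA (mk_image_le.trans_lt hB))
  obtain ⟨f, hf, hfix, hfab⟩ := hhom _ hAB a b (mem_locCl.not.mp ha) (mem_locCl.not.mp hb)
  have hfA : f '' A = A := EqOn.image_eq_self fun x hx => hfix x (mem_union_left _ hx)
  have hfB : ∀ x ∈ B, hf.restrictCompl hfA x = x := fun x hx =>
    Subtype.ext (hfix x (mem_union_right _ (mem_image_of_mem _ hx)))
  exact ⟨hf.restrictCompl hfA, hf.isAuto_restrictCompl hfA, hfB, Subtype.ext hfab⟩

/-- If `W` is `μ`-homogeneous (`μ` infinite) and `|A| < μ`, then the localization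
`W_A` is `μ`-homogeneous. -/
theorem stmt0 (cl : Set X → Set X) (hcl : IsClosure cl) (μ : Cardinal.{u})
    (hμ : ℵ₀ ≤ μ) (A : Set X) (hA : #A < μ) (hhom : IsHomog cl μ) :
    IsHomog (locCl cl A) μ :=
  stmt0_general cl μ hμ A hA hhom
end

section
/- Let W be a closure space. Then W has exchange (over every subset of its underlying set) if and only if W has exchange over every subset A of its underlying set with |A| < κ(W). -/
open Cardinal Set

universe u v

variable {X : Type u}

theorem IsClosure.monotone {cl : Set X → Set X} (hcl : IsClosure cl) : Monotone cl :=
  fun A B hAB => hcl.2 A B (hAB.trans (hcl.1 B))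

theorem exists_subset_mk_lt_kappaCard {cl : Set X → Set X} {A : Set X} {a : X} (ha : a ∈ cl A) :
    ∃ A₀ ⊆ A, #A₀ < kappaCard cl ∧ a ∈ cl A₀ := by
  have nonempty : {κ : Cardinal.{u} | ℵ₀ ≤ κ ∧ ∀ (A : Set X) (a : X), a ∈ cl A →
      ∃ A₀, A₀ ⊆ A ∧ #A₀ < κ ∧ a ∈ cl A₀}.Nonempty :=
    ⟨Order.succ (max ℵ₀ #X), (le_max_left _ _).trans (Order.le_succ _), fun A _ ha =>
      ⟨A, Subset.rfl, Order.lt_succ_of_le ((mk_set_le A).trans (le_max_right _ _)), ha⟩⟩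
  exact (csInf_mem nonempty).2 A a ha

theorem ExchOver.of_forall_subset_mk_lt_kappaCard {cl : Set X → Set X} (hcl : Monotone cl)
    {A : Set X} (h : ∀ B ⊆ A, #B < kappaCard cl → ExchOver cl B) : ExchOver cl A := by
  intro a b hab ha
  obtain ⟨C, hCA, hC, haC⟩ := exists_subset_mk_lt_kappaCard hab
  -- The small witness `C` may contain `b`; without `b` it lies in `A`, and monotonicity carries
  -- exchange over `C \ {b}` up to `A`.
  have hBA : C \ {b} ⊆ A := sdiff_subset_iff.2 (union_comm A {b} ▸ hCA)
  have hB : #(C \ {b} : Set X) < kappaCard cl := (mk_le_mk_of_subset sdiff_subset).trans_lt hC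
  have haB : a ∈ cl (C \ {b} ∪ {b}) := hcl (subset_sdiff_union C {b}) haC
  have hbB : b ∈ cl (C \ {b} ∪ {a}) := h _ hBA hB a b haB fun ha' => ha (hcl hBA ha')
  exact hcl (union_subset_union_left {a} hBA) hbB

theorem stmt2_general (cl : Set X → Set X) (hcl : Monotone cl) :
    (∀ A : Set X, ExchOver cl A) ↔
      ∀ A : Set X, #A < kappaCard cl → ExchOver cl A :=
  ⟨fun h A _ => h A, fun h _ => .of_forall_subset_mk_lt_kappaCard hcl fun B _ => h B⟩

/-- `W` has exchange (over every subset) iff it has exchange over every `A`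
with `|A| < κ(W)`. -/
theorem stmt2 (cl : Set X → Set X) (hcl : IsClosure cl) :
    (∀ A : Set X, ExchOver cl A) ↔
      ∀ A : Set X, #A < kappaCard cl → ExchOver cl A :=
  stmt2_general cl hcl.monotone
end

section
/- Let W be an ℵ₀-homogeneous closure space in which the empty set is closed, and suppose W fails exchange over the empty set. Then the preorder ≤ on W given by a ≤ b iff a ∈ cl({b}) is a dense linear preorder without endpoints: for all a, b either a ≤ b or b ≤ a; for all a < b there exists c with a < c < b; and for every a there exist b and c with b < a < c. -/
open Cardinal Set

universe u v

variable {X : Type u}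

/-!
An automorphism of `W` is an order automorphism of `≤`, so homogeneity yields two facts about the
preorder: its automorphisms act transitively, and those fixing a point `d` act transitively on
`{x | ¬ x ≤ d}`. Failure of exchange over `∅` is a pair `p < q`, and transporting it by an
automorphism puts some point above and some point below any given one. If `b ≰ a`, choose `c > a`
and an automorphism fixing `a` and sending `c` to `b`: it carries `a < c` to `a < b`. If `a < b`,
choose `c > b` and an automorphism `f` fixing `a` and sending `c` to `b`: it carries `a < b < c`
to `a < f b < b`.
-/

section Preorder

variable {α : Type*} [Preorder α]

theorem noMinOrder_of_isPretransitive [MulAction.IsPretransitive (α ≃o α) α] {p q : α}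
    (hpq : p < q) : NoMinOrder α where
  exists_lt a := by
    obtain ⟨f, rfl⟩ := MulAction.exists_smul_eq (α ≃o α) q a
    exact ⟨f p, f.lt_iff_lt.2 hpq⟩

theorem noMaxOrder_of_isPretransitive [MulAction.IsPretransitive (α ≃o α) α] {p q : α}
    (hpq : p < q) : NoMaxOrder α where
  exists_gt a := by
    obtain ⟨f, rfl⟩ := MulAction.exists_smul_eq (α ≃o α) p a
    exact ⟨f q, f.lt_iff_lt.2 hpq⟩

/-- The one-point homogeneity that a preorder inherits from a homogeneous closure space: the order
automorphisms fixing `d` act transitively on the points that are not below `d`. -/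
def IsPointHomogeneous (α : Type*) [Preorder α] : Prop :=
  ∀ d a b : α, ¬ a ≤ d → ¬ b ≤ d → ∃ f : α ≃o α, f d = d ∧ f a = b

namespace IsPointHomogeneous

variable [NoMaxOrder α]

protected theorem lt_of_not_ge (h : IsPointHomogeneous α) {a b : α} (hba : ¬ b ≤ a) : a < b := by
  obtain ⟨c, hac⟩ := exists_gt a
  obtain ⟨f, hfa, hfc⟩ := h a c b hac.not_ge hba
  calc
    a = f a := hfa.symm
    _ < f c := f.lt_iff_lt.2 hac
    _ = b := hfc

protected theorem le_total (h : IsPointHomogeneous α) (a b : α) : a ≤ b ∨ b ≤ a :=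
  or_iff_not_imp_right.2 fun hba => (h.lt_of_not_ge hba).le

theorem denselyOrdered (h : IsPointHomogeneous α) : DenselyOrdered α where
  dense a b hab := by
    obtain ⟨c, hbc⟩ := exists_gt b
    obtain ⟨f, hfa, hfc⟩ := h a c b (hab.trans hbc).not_ge hab.not_ge
    have h_left : a < f b := by simpa only [hfa] using f.lt_iff_lt.2 hab
    have h_right : f b < b := by simpa only [hfc] using f.lt_iff_lt.2 hbc
    exact ⟨f b, h_left, h_right⟩

end IsPointHomogeneous

end Preorder

section ClosureSpace

variable {cl : Set X → Set X}

/-- The preorder `≤` of a closure space: `a ≤ b` means `a ∈ cl {b}`. A definition rather than an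
instance, since it depends on `cl`. -/
abbrev IsClosure.preorder (hcl : IsClosure cl) : Preorder X where
  le a b := a ∈ cl {b}
  le_refl a := hcl.1 {a} (mem_singleton a)
  le_trans _ b c hab hbc := hcl.2 {b} {c} (singleton_subset_iff.2 hbc) hab

theorem IsAuto.apply_mem_singleton_iff {f : X → X} (hf : IsAuto cl f) (a b : X) :
    f a ∈ cl {f b} ↔ a ∈ cl {b} := by
  rw [← image_singleton, ← hf.2, hf.1.injective.mem_set_image]

theorem IsHomog.exists_orderIso {μ : Cardinal.{u}} (hhom : IsHomog cl μ) (hcl : IsClosure cl)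
    {A : Set X} (hA : #A < μ) {a b : X} (ha : a ∉ cl A) (hb : b ∉ cl A) :
    letI := hcl.preorder
    ∃ f : X ≃o X, (∀ x ∈ A, f x = x) ∧ f a = b := by
  obtain ⟨f, hf, hfA, hfa⟩ := hhom A hA a b ha hb
  exact ⟨⟨Equiv.ofBijective f hf.1, hf.apply_mem_singleton_iff _ _⟩, hfA, hfa⟩

theorem IsHomog.isPointHomogeneous {μ : Cardinal.{u}} (hhom : IsHomog cl μ) (hμ : 1 < μ)
    (hcl : IsClosure cl) :
    letI := hcl.preorder
    IsPointHomogeneous X := by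
  intro d a b ha hb
  obtain ⟨f, hfd, hfa⟩ := hhom.exists_orderIso hcl ((mk_singleton d).trans_lt hμ) ha hb
  exact ⟨f, hfd d (mem_singleton d), hfa⟩

theorem IsHomog.isPretransitive_orderIso {μ : Cardinal.{u}} (hhom : IsHomog cl μ) (hμ : 0 < μ)
    (hcl : IsClosure cl) (hempty : cl ∅ = ∅) :
    letI := hcl.preorder
    MulAction.IsPretransitive (X ≃o X) X := by
  have h_notMem (x : X) : x ∉ cl ∅ := by simp [hempty]
  let := hcl.preorder
  refine ⟨fun a b => ?_⟩
  obtain ⟨f, -, hfa⟩ := hhom.exists_orderIso hcl ((mk_eq_zero (∅ : Set X)).trans_lt hμ)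
    (h_notMem a) (h_notMem b)
  exact ⟨f, hfa⟩

theorem exists_lt_of_not_exchOver_empty (hcl : IsClosure cl) (hfail : ¬ ExchOver cl ∅) :
    letI := hcl.preorder
    ∃ p q : X, p < q := by
  simp only [ExchOver, empty_union, not_forall] at hfail
  obtain ⟨p, q, hpq, -, hqp⟩ := hfail
  exact ⟨p, q, hpq, hqp⟩

end ClosureSpace

theorem stmt6_general {μ : Cardinal.{u}} (hμ : 1 < μ) (cl : Set X → Set X) (hcl : IsClosure cl)
    (hhom : IsHomog cl μ) (hempty : cl ∅ = ∅) (hfail : ¬ ExchOver cl ∅) :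
    (∀ a b : X, a ∈ cl {b} ∨ b ∈ cl {a}) ∧
    (∀ a b : X, (a ∈ cl {b} ∧ b ∉ cl {a}) →
      ∃ c : X, (a ∈ cl {c} ∧ c ∉ cl {a}) ∧ (c ∈ cl {b} ∧ b ∉ cl {c})) ∧
    (∀ a : X, ∃ b c : X,
      (b ∈ cl {a} ∧ a ∉ cl {b}) ∧ (a ∈ cl {c} ∧ c ∉ cl {a})) := by
  let := hcl.preorder
  obtain ⟨p, q, hpq⟩ := exists_lt_of_not_exchOver_empty hcl hfail
  have := hhom.isPretransitive_orderIso (zero_lt_one.trans hμ) hcl hempty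
  have hpoint := hhom.isPointHomogeneous hμ hcl
  have := noMinOrder_of_isPretransitive hpq
  have := noMaxOrder_of_isPretransitive hpq
  refine ⟨hpoint.le_total, hpoint.denselyOrdered.dense, fun a => ?_⟩
  obtain ⟨b, hba⟩ := exists_lt a
  obtain ⟨c, hac⟩ := exists_gt a
  exact ⟨b, c, hba, hac⟩

/-- If `W` is `ℵ₀`-homogeneous, `∅` is closed, and exchange over `∅` fails, then
the preorder `a ≤ b ↔ a ∈ cl {b}` is a dense linear preorder without endpoints. -/
theorem stmt6 (cl : Set X → Set X) (hcl : IsClosure cl) (hhom : IsHomog cl ℵ₀)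
    (hempty : cl ∅ = ∅) (hfail : ¬ ExchOver cl ∅) :
    (∀ a b : X, a ∈ cl {b} ∨ b ∈ cl {a}) ∧
    (∀ a b : X, (a ∈ cl {b} ∧ b ∉ cl {a}) →
      ∃ c : X, (a ∈ cl {c} ∧ c ∉ cl {a}) ∧ (c ∈ cl {b} ∧ b ∉ cl {c})) ∧
    (∀ a : X, ∃ b c : X,
      (b ∈ cl {a} ∧ a ∉ cl {b}) ∧ (a ∈ cl {c} ∧ c ∉ cl {a})) := by
  exact stmt6_general one_lt_aleph0 cl hcl hhom hempty hfail
end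

section
/- Let W be an ℵ₀-homogeneous closure space in which the empty set is closed. If the underlying set of W is finite, then W has exchange over the empty set. -/
open Cardinal Set

universe u v

variable {X : Type u}

/-!
An automorphism fixing `A` pointwise and sending `a` to `b` carries `cl (A ∪ {a})` onto
`cl (A ∪ {b})`, so these closures have the same size. If `a ∈ cl (A ∪ {b})`, the first is contained
in the second, and a finite set has no proper subset of its own size.
-/

section Exchange

variable {cl : Set X → Set X} {A : Set X} {a b : X}

namespace IsClosure

theorem subset_cl (hcl : IsClosure cl) (A : Set X) : A ⊆ cl A :=
  hcl.1 A

theorem cl_union_singleton_subset (hcl : IsClosure cl) {B : Set X} (hA : A ⊆ cl B)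
    (ha : a ∈ cl B) : cl (A ∪ {a}) ⊆ cl B :=
  hcl.2 _ B (union_subset hA (singleton_subset_iff.2 ha))

theorem notMem_cl_of_mem_cl_union_singleton (hcl : IsClosure cl) (hab : a ∈ cl (A ∪ {b}))
    (ha : a ∉ cl A) : b ∉ cl A := fun hb ↦
  ha (hcl.cl_union_singleton_subset (hcl.subset_cl A) hb hab)

end IsClosure

theorem IsAuto.encard_cl_image {f : X → X} (hf : IsAuto cl f) (A : Set X) :
    (cl (f '' A)).encard = (cl A).encard := by
  rw [← hf.2 A, hf.1.injective.encard_image]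

theorem IsHomog.encard_cl_union_singleton_eq {μ : Cardinal.{u}} (hhom : IsHomog cl μ)
    (hA : #A < μ) (ha : a ∉ cl A) (hb : b ∉ cl A) :
    (cl (A ∪ {a})).encard = (cl (A ∪ {b})).encard := by
  obtain ⟨f, hf, hfA, rfl⟩ := hhom A hA a b ha hb
  have himage : f '' (A ∪ {a}) = A ∪ {f a} := by
    rw [image_union, image_singleton, EqOn.image_eq_self hfA]
  rw [← himage, hf.encard_cl_image]

theorem stmt7_general {μ : Cardinal.{u}} (hcl : IsClosure cl) (hhom : IsHomog cl μ)
    (hA : #A < μ) (hfin : ∀ b, (cl (A ∪ {b})).Finite) : ExchOver cl A := by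
  intro a b hab ha
  have hb : b ∉ cl A := hcl.notMem_cl_of_mem_cl_union_singleton hab ha
  have hsub : cl (A ∪ {a}) ⊆ cl (A ∪ {b}) :=
    hcl.cl_union_singleton_subset (subset_union_left.trans (hcl.subset_cl _)) hab
  have hcard : (cl (A ∪ {b})).encard = (cl (A ∪ {a})).encard :=
    hhom.encard_cl_union_singleton_eq hA hb ha
  have heq : cl (A ∪ {a}) = cl (A ∪ {b}) :=
    (hfin b).eq_of_subset_of_encard_le' hsub hcard.le
  rw [heq]
  exact hcl.subset_cl _ (mem_union_right A (mem_singleton b))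

end Exchange

/-- An `ℵ₀`-homogeneous closure space with `∅` closed and finite underlying set
has exchange over `∅`. -/
theorem stmt7 (cl : Set X → Set X) (hcl : IsClosure cl) (hhom : IsHomog cl ℵ₀)
    (hempty : cl ∅ = ∅) (hfin : Finite X) :
    ExchOver cl ∅ :=
  stmt7_general hcl hhom (mk_lt_aleph0_iff.2 inferInstance) fun _ ↦ toFinite _
end

section
/- Let W be an ℵ₀-homogeneous closure space in which the empty set is closed. If the cardinality of the underlying set of W is at least LS(W)⁺⁺ (the double successor of LS(W)), then W has exchange over the empty set. -/
open Cardinal Set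

universe u v

variable {X : Type u}

/-!
Suppose exchange over `A` fails, witnessed by `a ∈ cl (A ∪ {b})` and `b ∉ cl (A ∪ {a})`.
Homogeneity over `A` moves `a` to any point `x ∉ cl A`, and homogeneity over `A ∪ {x}` then moves
the image of `b` to any `y ∉ cl (A ∪ {x})`; so `x ∈ cl (A ∪ {y})` for all such `x` and `y`. Hence
the relation `x ∈ cl (A ∪ {y})` is total, while its initial segments have cardinality at most
`#A + LS(W)`. A total relation with initial segments of cardinality at most `κ` lives on a type of
cardinality at most `κ⁺`.
-/

theorem mk_le_succ_of_total {κ : Cardinal.{u}} (hκ : ℵ₀ ≤ κ) {r : X → X → Prop}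
    (htotal : ∀ x y, r x y ∨ r y x) (hsegment : ∀ y, #{x | r x y} ≤ κ) :
    #X ≤ Order.succ κ := by
  by_contra! hX
  obtain ⟨S, hS⟩ := le_mk_iff_exists_set.1 hX.le
  have hbelow : #(⋃ s : S, {x | r x s}) < #X := by
    calc #(⋃ s : S, {x | r x s})
      _ ≤ #S * ⨆ s : S, #{x | r x s} := mk_iUnion_le _
      _ ≤ Order.succ κ * κ := mul_le_mul' hS.le (ciSup_le' fun s => hsegment s)
      _ = Order.succ κ :=
        mul_eq_left (hκ.trans (Order.le_succ κ)) (Order.le_succ κ) (aleph0_pos.trans_le hκ).ne'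
      _ < #X := hX
  obtain ⟨y, hy⟩ : ∃ y, y ∉ ⋃ s : S, {x | r x s} := by
    by_contra! hall
    exact hbelow.ne (by rw [eq_univ_of_forall hall, mk_univ])
  have hSy : S ⊆ {x | r x y} := fun s hs =>
    (htotal s y).resolve_right fun hys => hy (mem_iUnion.2 ⟨⟨s, hs⟩, hys⟩)
  have hSκ : Order.succ κ ≤ κ := hS ▸ (mk_le_mk_of_subset hSy).trans (hsegment y)
  exact (Order.lt_succ κ).not_ge hSκ

theorem LSCard_mem (cl : Set X → Set X) :
    LSCard cl ∈ {μ : Cardinal.{u} | ℵ₀ ≤ μ ∧ ∀ A : Set X, #(cl A) ≤ #A + μ} :=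
  csInf_mem ⟨max ℵ₀ #X, le_max_left _ _, fun A =>
    (mk_set_le (cl A)).trans ((le_max_right _ _).trans le_add_self)⟩

theorem aleph0_le_LSCard (cl : Set X → Set X) : ℵ₀ ≤ LSCard cl :=
  (LSCard_mem cl).1

theorem mk_cl_le_add_LSCard (cl : Set X → Set X) (A : Set X) : #(cl A) ≤ #A + LSCard cl :=
  (LSCard_mem cl).2 A

theorem mk_union_singleton_le (A : Set X) (x : X) : #(A ∪ {x} : Set X) ≤ #A + 1 :=
  union_singleton (a := x) (s := A) ▸ mk_insert_le

theorem mk_cl_union_singleton_le (cl : Set X → Set X) (A : Set X) (x : X) :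
    #(cl (A ∪ {x})) ≤ #A + LSCard cl :=
  calc #(cl (A ∪ {x}))
    _ ≤ #(A ∪ {x} : Set X) + LSCard cl := mk_cl_le_add_LSCard cl _
    _ ≤ #A + 1 + LSCard cl := by gcongr; exact mk_union_singleton_le A x
    _ = #A + LSCard cl := by
      have hLS := aleph0_le_LSCard cl
      rw [add_assoc, add_eq_right hLS (one_le_aleph0.trans hLS)]

section

variable {cl : Set X → Set X}

theorem IsClosure.mono (hcl : IsClosure cl) {A B : Set X} (h : A ⊆ B) : cl A ⊆ cl B :=
  hcl.2 A B (h.trans (hcl.1 B))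

theorem IsAuto.apply_mem_cl_union_singleton_iff {f : X → X} (hf : IsAuto cl f) {A : Set X}
    (hfix : ∀ x ∈ A, f x = x) {x y : X} : f x ∈ cl (A ∪ {f y}) ↔ x ∈ cl (A ∪ {y}) := by
  have himage : f '' (A ∪ {y}) = A ∪ {f y} := by
    rw [image_union, image_singleton, image_congr hfix, image_id']
  rw [← himage, ← hf.2, hf.1.injective.mem_set_image]

theorem IsHomog.mem_cl_or_mem_cl_of_not_exchOver {μ : Cardinal.{u}} (hhom : IsHomog cl μ)
    (hcl : IsClosure cl) {A : Set X} (hA : #A + 1 < μ) (hexch : ¬ExchOver cl A) (x y : X) :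
    x ∈ cl (A ∪ {y}) ∨ y ∈ cl (A ∪ {x}) := by
  rw [or_iff_not_imp_right]
  intro hyx
  by_cases hx : x ∈ cl A
  · exact hcl.mono subset_union_left hx
  simp only [ExchOver, not_forall] at hexch
  obtain ⟨a, b, hab, ha, hba⟩ := hexch
  obtain ⟨f, hf, hfix, rfl⟩ := hhom A (le_self_add.trans_lt hA) a x ha hx
  have hfba : f b ∉ cl (A ∪ {f a}) := (hf.apply_mem_cl_union_singleton_iff hfix).not.2 hba
  have hfab : f a ∈ cl (A ∪ {f b}) := (hf.apply_mem_cl_union_singleton_iff hfix).2 hab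
  obtain ⟨g, hg, hgfix, rfl⟩ :=
    hhom (A ∪ {f a}) ((mk_union_singleton_le A (f a)).trans_lt hA) (f b) y hfba hyx
  have hgfa : g (f a) = f a := hgfix (f a) (mem_union_right A rfl)
  have hgfab : g (f a) ∈ cl (A ∪ {g (f b)}) :=
    (hg.apply_mem_cl_union_singleton_iff fun z hz => hgfix z (mem_union_left _ hz)).2 hfab
  rwa [hgfa] at hgfab

theorem stmt8_general {μ : Cardinal.{u}} (hcl : IsClosure cl) (hhom : IsHomog cl μ) {A : Set X}
    (hA : #A + 1 < μ) (hcard : Order.succ (Order.succ (#A + LSCard cl)) ≤ #X) :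
    ExchOver cl A := by
  by_contra hexch
  have hX : #X ≤ Order.succ (#A + LSCard cl) :=
    mk_le_succ_of_total ((aleph0_le_LSCard cl).trans le_add_self)
      (hhom.mem_cl_or_mem_cl_of_not_exchOver hcl hA hexch) (mk_cl_union_singleton_le cl A)
  exact (Order.lt_succ _).not_ge (hcard.trans hX)

end

/-- An `ℵ₀`-homogeneous closure space with `∅` closed and of cardinality at least
`LS(W)⁺⁺` has exchange over `∅`. -/
theorem stmt8 (cl : Set X → Set X) (hcl : IsClosure cl) (hhom : IsHomog cl ℵ₀)
    (hempty : cl ∅ = ∅)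
    (hcard : Order.succ (Order.succ (LSCard cl)) ≤ #X) :
    ExchOver cl ∅ :=
  stmt8_general hcl hhom (by simp) (by simpa using hcard)
end

section
/- Let K be an abstract elementary class, let λ ≥ LS(K) be a cardinal, and let N ∈ K be a model of cardinality at least λ. If every M ∈ K with M ≤ₖ N and ‖M‖ = λ admits intersections, then N admits intersections. In particular, if every model of K of cardinality λ admits intersections, then every model of K of cardinality at least λ admits intersections. -/
open Cardinal Set FirstOrder

universe u

/-- A `τ`-structure whose universe is a subset of a fixed domain `Ω`. -/
def ModelOn (L : FirstOrder.Language.{u, u}) (Ω : Type u) : Type u :=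
  Σ s : Set Ω, L.Structure s

variable {L : FirstOrder.Language.{u, u}} {Ω : Type u}

noncomputable instance modelStr (M : ModelOn L Ω) : L.Structure ↥M.1 := M.2

/-- `M` is a substructure of `N`: the universe of `M` is a subset of that of `N`
and the inclusion map is an `L`-embedding. -/
def ModelOn.IsSub (M N : ModelOn L Ω) : Prop :=
  M.1 ⊆ N.1 ∧ ∃ e : ↥M.1 ↪[L] ↥N.1, ∀ x : ↥M.1, (e x : Ω) = (x : Ω)

/-- An abstract elementary class whose models have universes contained in `Ω`. -/
structure AECStr (L : FirstOrder.Language.{u, u}) (Ω : Type u) where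
  /-- the class of models -/
  mem : Set (ModelOn L Ω)
  /-- the strong substructure relation `≤ₖ` -/
  le : ModelOn L Ω → ModelOn L Ω → Prop
  /-- the Löwenheim-Skolem-Tarski number -/
  LS : Cardinal.{u}
  le_refl : ∀ M ∈ mem, le M M
  le_antisymm : ∀ {M N}, le M N → le N M → M = N
  le_trans : ∀ {M N P}, le M N → le N P → le M P
  le_mem_left : ∀ {M N}, le M N → M ∈ mem
  le_mem_right : ∀ {M N}, le M N → N ∈ mem
  /-- `M ≤ₖ N` implies that `M` is a substructure of `N` -/
  le_isSub : ∀ {M N}, le M N → ModelOn.IsSub M N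
  /-- `K` and `≤ₖ` respect isomorphisms: if `M ≤ₖ N` and `f : N ≅ N'`, then
  `f[M] ≤ₖ N'` (phrased as: there is `M' ≤ₖ N'` and an isomorphism `g : M ≅ M'`
  agreeing with `f` on `M`). -/
  iso_resp : ∀ {M N N' : ModelOn L Ω}, le M N → ∀ f : ↥N.1 ≃[L] ↥N'.1,
    ∃ (M' : ModelOn L Ω) (g : ↥M.1 ≃[L] ↥M'.1), le M' N' ∧
      ∀ (x : ↥M.1) (y : ↥N.1), (y : Ω) = (x : Ω) → ((g x : Ω)) = ((f y : Ω))
  /-- coherence -/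
  coherence : ∀ {M₀ M₁ M₂}, le M₀ M₂ → le M₁ M₂ → M₀.1 ⊆ M₁.1 → le M₀ M₁
  /-- Tarski-Vaught chain axioms: a `≤ₖ`-directed system has a union which is in
  the class, lies above every member of the system, and is below any common
  extension of the system. -/
  chain_union : ∀ {ι : Type u} (Mi : ι → ModelOn L Ω), Nonempty ι →
    (∀ i j : ι, ∃ k, le (Mi i) (Mi k) ∧ le (Mi j) (Mi k)) →
    ∃ M : ModelOn L Ω, M.1 = ⋃ i, (Mi i).1 ∧ (∀ i, le (Mi i) M) ∧
      ∀ N, (∀ i, le (Mi i) N) → le M N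
  /-- `LS ≥ |τ| + ℵ₀` -/
  LS_ge : L.card + ℵ₀ ≤ LS
  /-- the Löwenheim-Skolem-Tarski axiom -/
  LST : ∀ M ∈ mem, ∀ A : Set Ω, A ⊆ M.1 →
    ∃ M₀, le M₀ M ∧ A ⊆ M₀.1 ∧ #M₀.1 ≤ #A + LS
  /-- `LS` is the least such cardinal -/
  LS_min : ∀ μ : Cardinal.{u}, L.card + ℵ₀ ≤ μ →
    (∀ M ∈ mem, ∀ A : Set Ω, A ⊆ M.1 →
      ∃ M₀, le M₀ M ∧ A ⊆ M₀.1 ∧ #M₀.1 ≤ #A + μ) → LS ≤ μ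

/-- `cl^N(A)`: the intersection of the universes of all `M ≤ₖ N` containing `A`. -/
def aecCl (K : AECStr L Ω) (N : ModelOn L Ω) (A : Set Ω) : Set Ω :=
  {x : Ω | ∀ M : ModelOn L Ω, K.le M N → A ⊆ M.1 → x ∈ M.1}

/-- `N` admits intersections: for every `A ⊆ |N|`, `cl^N(A)` is the universe of
some `M ≤ₖ N`. -/
def AdmitsInter (K : AECStr L Ω) (N : ModelOn L Ω) : Prop :=
  ∀ A : Set Ω, A ⊆ N.1 → ∃ M : ModelOn L Ω, K.le M N ∧ M.1 = aecCl K N A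

/-- There is a `K`-embedding of `M` into `N` fixing `F` pointwise: an isomorphism
from `M` onto some `M' ≤ₖ N` which is the identity on `F`. -/
def KEmbedFixing (K : AECStr L Ω) (M N : ModelOn L Ω) (F : Set Ω) : Prop :=
  ∃ M' : ModelOn L Ω, K.le M' N ∧
    ∃ g : ↥M.1 ≃[L] ↥M'.1, ∀ x : ↥M.1, (x : Ω) ∈ F → ((g x : Ω)) = (x : Ω)

/-- Uniqueness of the generic type, via the characterization of Galois types in
classes admitting intersections: whenever `M ≤ₖ N₁`, `M ≤ₖ N₂` are countable
and `a₁ ∈ |N₁| \ |M|`, `a₂ ∈ |N₂| \ |M|`, there is an isomorphism from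
`cl^{N₁}(|M| ∪ {a₁})` onto `cl^{N₂}(|M| ∪ {a₂})` fixing `M` pointwise and
sending `a₁` to `a₂`. -/
def GenericUnique (K : AECStr L Ω) : Prop :=
  ∀ M N₁ N₂ : ModelOn L Ω, K.le M N₁ → K.le M N₂ →
    #N₁.1 ≤ ℵ₀ → #N₂.1 ≤ ℵ₀ →
    ∀ a₁ a₂ : Ω, a₁ ∈ N₁.1 \ M.1 → a₂ ∈ N₂.1 \ M.1 →
    ∃ M₁ M₂ : ModelOn L Ω, K.le M₁ N₁ ∧ K.le M₂ N₂ ∧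
      M₁.1 = aecCl K N₁ (M.1 ∪ {a₁}) ∧ M₂.1 = aecCl K N₂ (M.1 ∪ {a₂}) ∧
      ∃ g : ↥M₁.1 ≃[L] ↥M₂.1,
        (∀ x : ↥M₁.1, (x : Ω) ∈ M.1 → ((g x : Ω)) = (x : Ω)) ∧
        (∀ x : ↥M₁.1, (x : Ω) = a₁ → ((g x : Ω)) = a₂)

/-- A quasiminimal AEC: countable `LS`, a prime model, countable models admit
intersections, and uniqueness of the generic type over countable models. -/
def IsQuasiminimal (K : AECStr L Ω) : Prop :=
  K.LS = ℵ₀ ∧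
  (∃ M ∈ K.mem, ∀ N ∈ K.mem, KEmbedFixing K M N ∅) ∧
  (∀ N ∈ K.mem, #N.1 ≤ ℵ₀ → AdmitsInter K N) ∧
  GenericUnique K

/-!
Over a set `A` with at most `λ` elements, take `M ≤ₖ N` of cardinality `λ` containing `A`.
Whenever `M ≤ₖ Q ≤ₖ N` and `Q` admits intersections over `A`, coherence gives
`cl^M(A) = cl^Q(A)`. Any `M' ≤ₖ N` containing `A` has a submodel `P` of cardinality at most `λ`
which still contains `A`, and choosing `Q` of cardinality `λ` above both `M` and `P` shows
`cl^M(A) ⊆ |P| ⊆ |M'|`. Hence `cl^M(A) = cl^N(A)`. An arbitrary `A` is the directed union of its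
finite subsets `F`, and the models on `cl^N(F)` form a `≤ₖ`-directed system whose union is the
model on `cl^N(A)`.
-/

section Closure

variable {K : AECStr L Ω} {M N : ModelOn L Ω} {A B : Set Ω}

theorem subset_aecCl : A ⊆ aecCl K N A :=
  fun _ hx _ _ hA => hA hx

theorem aecCl_subset_of_le (hMN : K.le M N) (hAM : A ⊆ M.1) : aecCl K N A ⊆ M.1 :=
  fun _ hx => hx M hMN hAM

theorem aecCl_mono (hAB : A ⊆ B) : aecCl K N A ⊆ aecCl K N B :=
  fun _ hx M hMN hBM => hx M hMN (hAB.trans hBM)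

theorem aecCl_subset_aecCl_of_le (hMN : K.le M N) : aecCl K N A ⊆ aecCl K M A :=
  fun _ hx P hPM hAP => hx P (K.le_trans hPM hMN) hAP

/-- `N` admits intersections over `A`: the closure `cl^N(A)` is the universe of some `M ≤ₖ N`.
This forces `A ⊆ |N|`, since `aecCl K N A` is all of `Ω` otherwise. -/
def AdmitsInterOver (K : AECStr L Ω) (N : ModelOn L Ω) (A : Set Ω) : Prop :=
  ∃ M : ModelOn L Ω, K.le M N ∧ M.1 = aecCl K N A

theorem admitsInterOver_of_subset_aecCl (hMN : K.le M N) (hAM : A ⊆ M.1)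
    (hM : M.1 ⊆ aecCl K N A) : AdmitsInterOver K N A :=
  ⟨M, hMN, hM.antisymm (aecCl_subset_of_le hMN hAM)⟩

theorem AdmitsInterOver.aecCl_eq_of_le (hN : AdmitsInterOver K N A) (hMN : K.le M N)
    (hAM : A ⊆ M.1) : aecCl K M A = aecCl K N A := by
  obtain ⟨P, hPN, hP⟩ := hN
  have hPM : K.le P M := K.coherence hPN hMN (hP.trans_subset (aecCl_subset_of_le hMN hAM))
  refine Subset.antisymm ?_ (aecCl_subset_aecCl_of_le hMN)
  rw [← hP]
  exact aecCl_subset_of_le hPM (subset_aecCl.trans_eq hP.symm)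

theorem AdmitsInterOver.iUnion_of_directed {ι : Type u} [Nonempty ι] {A : ι → Set Ω}
    (hA : Directed (· ⊆ ·) A) (h : ∀ i, AdmitsInterOver K N (A i)) :
    AdmitsInterOver K N (⋃ i, A i) := by
  choose C hCN hC using h
  have hC_le {i j : ι} (hij : A i ⊆ A j) : K.le (C i) (C j) := by
    refine K.coherence (hCN i) (hCN j) ?_
    rw [hC, hC]
    exact aecCl_mono hij
  have hC_directed (i j : ι) : ∃ k, K.le (C i) (C k) ∧ K.le (C j) (C k) :=
    let ⟨k, hik, hjk⟩ := hA i j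
    ⟨k, hC_le hik, hC_le hjk⟩
  obtain ⟨M, hM, -, hM_le⟩ := K.chain_union C inferInstance hC_directed
  simp only [hC] at hM
  refine admitsInterOver_of_subset_aecCl (hM_le N hCN) ?_ ?_ <;> rw [hM]
  · exact iUnion_mono fun _ => subset_aecCl
  · exact iUnion_subset fun i => aecCl_mono (subset_iUnion A i)

theorem admitsInter_of_finite
    (h : ∀ F : Set Ω, F ⊆ N.1 → F.Finite → AdmitsInterOver K N F) : AdmitsInter K N := by
  classical
  intro A hAN
  let finiteSubset (F : Finset A) : Set Ω := (↑) '' (F : Set A)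
  have hdir : Directed (· ⊆ ·) finiteSubset :=
    Monotone.directed_le fun _ _ hFG => image_mono (Finset.coe_subset.2 hFG)
  have hcover : ⋃ F, finiteSubset F = A := by
    rw [← image_iUnion, iUnion_eq_univ_iff.2 fun a => ⟨{a}, by simp⟩, Subtype.coe_image_univ]
  have hadm (F : Finset A) : AdmitsInterOver K N (finiteSubset F) :=
    h _ ((Subtype.coe_image_subset A _).trans hAN) (F.finite_toSet.image _)
  exact hcover ▸ AdmitsInterOver.iUnion_of_directed hdir hadm

end Closure

section LowenheimSkolem

theorem mk_union_le_of_le {α : Type u} {S T : Set α} {κ : Cardinal.{u}} (hκ : ℵ₀ ≤ κ)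
    (hS : #S ≤ κ) (hT : #T ≤ κ) : #↥(S ∪ T) ≤ κ :=
  (mk_union_le S T).trans (add_le_of_le hκ hS hT)

variable {K : AECStr L Ω} {N : ModelOn L Ω} {A : Set Ω} {lam : Cardinal.{u}}

theorem AECStr.aleph0_le_LS (K : AECStr L Ω) : ℵ₀ ≤ K.LS :=
  (self_le_add_left _ _).trans K.LS_ge

theorem exists_le_mk_le (hlam : K.LS ≤ lam) (hN : N ∈ K.mem) (hAN : A ⊆ N.1) (hA : #A ≤ lam) :
    ∃ M, K.le M N ∧ A ⊆ M.1 ∧ #M.1 ≤ lam :=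
  let ⟨M, hMN, hAM, hM⟩ := K.LST N hN A hAN
  ⟨M, hMN, hAM, hM.trans (add_le_of_le (K.aleph0_le_LS.trans hlam) hA hlam)⟩

theorem exists_le_mk_eq (hlam : K.LS ≤ lam) (hN : N ∈ K.mem) (hlamN : lam ≤ #N.1)
    (hAN : A ⊆ N.1) (hA : #A ≤ lam) : ∃ M, K.le M N ∧ A ⊆ M.1 ∧ #M.1 = lam := by
  obtain ⟨B, hBN, hB⟩ := le_mk_iff_exists_subset.1 hlamN
  obtain ⟨M, hMN, hABM, hM⟩ := exists_le_mk_le hlam hN (union_subset hAN hBN)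
    (mk_union_le_of_le (K.aleph0_le_LS.trans hlam) hA hB.le)
  obtain ⟨hAM, hBM⟩ := union_subset_iff.1 hABM
  exact ⟨M, hMN, hAM, hM.antisymm (hB.symm.trans_le (mk_le_mk_of_subset hBM))⟩

theorem admitsInterOver_of_forall_mk_eq (hlam : K.LS ≤ lam) (hN : N ∈ K.mem) (hlamN : lam ≤ #N.1)
    (hAN : A ⊆ N.1) (hA : #A ≤ lam)
    (h : ∀ M, K.le M N → #M.1 = lam → A ⊆ M.1 → AdmitsInterOver K M A) :
    AdmitsInterOver K N A := by
  obtain ⟨M, hMN, hAM, hM⟩ := exists_le_mk_eq hlam hN hlamN hAN hA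
  obtain ⟨C, hCM, hC⟩ := h M hMN hM hAM
  refine admitsInterOver_of_subset_aecCl (K.le_trans hCM hMN)
    (subset_aecCl.trans_eq hC.symm) fun x hxC M' hM'N hAM' => ?_
  obtain ⟨P, hPM', hAP, hP⟩ := exists_le_mk_le hlam (K.le_mem_left hM'N) hAM' hA
  have hPN : K.le P N := K.le_trans hPM' hM'N
  obtain ⟨Q, hQN, hMPQ, hQ⟩ := exists_le_mk_eq hlam hN hlamN
    (union_subset (K.le_isSub hMN).1 (K.le_isSub hPN).1)
    (mk_union_le_of_le (K.aleph0_le_LS.trans hlam) hM.le hP)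
  obtain ⟨hMQ, hPQ⟩ := union_subset_iff.1 hMPQ
  have hcl : aecCl K M A = aecCl K Q A :=
    (h Q hQN hQ (hAM.trans hMQ)).aecCl_eq_of_le (K.coherence hMN hQN hMQ) hAM
  have hxP : x ∈ P.1 :=
    aecCl_subset_of_le (K.coherence hPN hQN hPQ) hAP (hcl ▸ hC ▸ hxC)
  exact (K.le_isSub hPM').1 hxP

end LowenheimSkolem

/-- If `λ ≥ LS(K)`, `N ∈ K` has cardinality at least `λ`, and every `M ≤ₖ N` of
cardinality `λ` admits intersections, then `N` admits intersections. In
particular, if every model of `K` of cardinality `λ` admits intersections, then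
every model of `K` of cardinality at least `λ` admits intersections. -/
theorem stmt15 (K : AECStr L Ω) (lam : Cardinal.{u}) (hlam : K.LS ≤ lam) :
    (∀ N ∈ K.mem, lam ≤ #N.1 →
      (∀ M : ModelOn L Ω, K.le M N → #M.1 = lam → AdmitsInter K M) →
      AdmitsInter K N) ∧
    ((∀ M ∈ K.mem, #M.1 = lam → AdmitsInter K M) →
      ∀ N ∈ K.mem, lam ≤ #N.1 → AdmitsInter K N) := by
  have transfer (N : ModelOn L Ω) (hN : N ∈ K.mem) (hlamN : lam ≤ #N.1)
      (h : ∀ M : ModelOn L Ω, K.le M N → #M.1 = lam → AdmitsInter K M) : AdmitsInter K N :=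
    admitsInter_of_finite fun F hFN hF =>
      have hF_card : #F ≤ lam := hF.lt_aleph0.le.trans (K.aleph0_le_LS.trans hlam)
      admitsInterOver_of_forall_mk_eq hlam hN hlamN hFN hF_card
        fun M hMN hM hFM => h M hMN hM F hFM
  exact ⟨transfer, fun h N hN hlamN =>
    transfer N hN hlamN fun M hMN hM => h M (K.le_mem_left hMN) hM⟩
end

section
/- Let K be a quasiminimal abstract elementary class. Then every model of K admits intersections, and for every N ∈ K the pair (|N|, cl^N) is a pregeometry (i.e., a closure space with finite character and exchange) whose closed sets are exactly the universes of the M ∈ K with M ≤ₖ N. -/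
open Cardinal Set FirstOrder

universe u

variable {L : FirstOrder.Language.{u, u}} {Ω : Type u}

/-!
Exchange over `A` is proved as follows. Suppose `a ∈ cl(A ∪ {b}) \ cl(A)` but `b ∉ cl(A ∪ {a})`.
By Zorn's lemma choose `I` maximal among the strong submodels with `cl(A) ⊆ I ⊆ cl(A ∪ {a})` and
`a ∉ I`. By maximality, every `w ∈ cl(I ∪ {a}) \ I` satisfies `a ∈ cl(I ∪ {w})`. Since `a` and `b`
have the same type over `I`, every `w ∈ cl(I ∪ {b}) \ I` satisfies `b ∈ cl(I ∪ {w})`. For `w = a`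
this gives `b ∈ cl(I ∪ {a}) = cl(A ∪ {a})`, a contradiction.

Uniqueness of the generic type is available only in models of size at most `LS(K)`. The argument
still reaches all models, because closures do not depend on the ambient model and the closure of a
set is the directed union of the closures of its finite subsets.
-/

namespace AECStr

variable {K : AECStr L Ω} {M N P Q : ModelOn L Ω} {A B s : Set Ω} {a b : Ω}

theorem subset_aecCl : A ⊆ aecCl K N A :=
  fun _ hx _ _ hA => hA hx

theorem aecCl_subset_aecCl (h : A ⊆ aecCl K N B) : aecCl K N A ⊆ aecCl K N B :=
  fun _ hx M hM hB => hx M hM fun _ ha => h ha M hM hB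

theorem aecCl_mono (h : A ⊆ B) : aecCl K N A ⊆ aecCl K N B :=
  aecCl_subset_aecCl (h.trans subset_aecCl)

theorem mem_aecCl_union_singleton : a ∈ aecCl K N (A ∪ {a}) :=
  subset_aecCl (Or.inr rfl)

theorem subset_aecCl_union_singleton : A ⊆ aecCl K N (A ∪ {a}) :=
  subset_union_left.trans subset_aecCl

theorem aecCl_union_singleton_subset (hA : A ⊆ aecCl K N B) (ha : a ∈ aecCl K N B) :
    aecCl K N (A ∪ {a}) ⊆ aecCl K N B :=
  aecCl_subset_aecCl (union_subset hA (singleton_subset_iff.2 ha))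

theorem aecCl_subset_aecCl_of_le (h : K.le P N) : aecCl K N A ⊆ aecCl K P A :=
  fun _ hx M hM => hx M (K.le_trans hM h)

/-- `s` is the universe of some `M ≤ₖ N`. Since such an `M` is determined by its universe, the
strong submodels of `N` can be handled as sets. -/
def IsStrong (K : AECStr L Ω) (N : ModelOn L Ω) (s : Set Ω) : Prop :=
  ∃ M : ModelOn L Ω, K.le M N ∧ M.1 = s

namespace IsStrong

theorem subset (hs : K.IsStrong N s) : s ⊆ N.1 := by
  obtain ⟨M, hM, rfl⟩ := hs
  exact (K.le_isSub hM).1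

theorem aecCl_subset (hs : K.IsStrong N s) (hA : A ⊆ s) : aecCl K N A ⊆ s := by
  obtain ⟨M, hM, rfl⟩ := hs
  exact fun _ hx => hx M hM hA

theorem aecCl_eq (hs : K.IsStrong N s) : aecCl K N s = s :=
  (hs.aecCl_subset Subset.rfl).antisymm subset_aecCl

theorem of_le (hP : K.le P N) (hs : K.IsStrong N s) (hsP : s ⊆ P.1) : K.IsStrong P s := by
  obtain ⟨M, hM, rfl⟩ := hs
  exact ⟨M, K.coherence hM hP hsP, rfl⟩

theorem trans (hs : K.IsStrong P s) (hP : K.le P N) : K.IsStrong N s := by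
  obtain ⟨M, hM, rfl⟩ := hs
  exact ⟨M, K.le_trans hM hP, rfl⟩

theorem sUnion {c : Set (Set Ω)} (hc : ∀ s ∈ c, K.IsStrong N s) (hne : c.Nonempty)
    (hd : DirectedOn (· ⊆ ·) c) : K.IsStrong N (⋃₀ c) := by
  choose M hMN hM using fun s : c => hc s s.2
  obtain ⟨U, hU, -, hle⟩ := K.chain_union M hne.to_subtype fun i j => by
    obtain ⟨t, ht, hit, hjt⟩ := hd i i.2 j j.2
    refine ⟨⟨t, ht⟩, K.coherence (hMN _) (hMN _) ?_, K.coherence (hMN _) (hMN _) ?_⟩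
    · simpa only [hM] using hit
    · simpa only [hM] using hjt
  exact ⟨U, hle N hMN, by simp only [hU, hM, sUnion_eq_iUnion]⟩

theorem aecCl_eq_of_le (hcl : K.IsStrong N (aecCl K N A)) (hP : K.le P N) (hA : A ⊆ P.1) :
    aecCl K P A = aecCl K N A := by
  have hclP : aecCl K N A ⊆ P.1 := fun _ hx => hx P hP hA
  exact ((hcl.of_le hP hclP).aecCl_subset subset_aecCl).antisymm (aecCl_subset_aecCl_of_le hP)

end IsStrong

theorem isStrong_biUnion_aecCl_finite
    (hfin : ∀ s ⊆ N.1, s.Finite → K.IsStrong N (aecCl K N s)) (hA : A ⊆ N.1) :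
    K.IsStrong N (⋃ s ∈ {s | s ⊆ A ∧ s.Finite}, aecCl K N s) := by
  rw [← sUnion_image]
  refine IsStrong.sUnion ?_ ⟨_, ∅, ⟨empty_subset A, finite_empty⟩, rfl⟩ ?_
  · rintro _ ⟨s, ⟨hsA, hs⟩, rfl⟩
    exact hfin s (hsA.trans hA) hs
  · rintro _ ⟨s, ⟨hsA, hs⟩, rfl⟩ _ ⟨t, ⟨htA, ht⟩, rfl⟩
    exact ⟨_, ⟨s ∪ t, ⟨union_subset hsA htA, hs.union ht⟩, rfl⟩,
      aecCl_mono subset_union_left, aecCl_mono subset_union_right⟩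

theorem aecCl_eq_biUnion_finite
    (hfin : ∀ s ⊆ N.1, s.Finite → K.IsStrong N (aecCl K N s)) (hA : A ⊆ N.1) :
    aecCl K N A = ⋃ s ∈ {s | s ⊆ A ∧ s.Finite}, aecCl K N s := by
  refine ((isStrong_biUnion_aecCl_finite hfin hA).aecCl_subset fun a ha => ?_).antisymm
    (iUnion₂_subset fun s hs => aecCl_mono hs.1)
  exact mem_biUnion (show {a} ∈ {s | s ⊆ A ∧ s.Finite} from
    ⟨singleton_subset_iff.2 ha, finite_singleton a⟩) (subset_aecCl rfl)

theorem isStrong_aecCl (hN : AdmitsInter K N) (hA : A ⊆ N.1) : K.IsStrong N (aecCl K N A) :=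
  hN A hA

theorem admitsInter_of_finite (hfin : ∀ s ⊆ N.1, s.Finite → K.IsStrong N (aecCl K N s)) :
    AdmitsInter K N := fun A hA => by
  have hU := isStrong_biUnion_aecCl_finite hfin hA
  rwa [← aecCl_eq_biUnion_finite hfin hA] at hU

theorem exists_finite_mem_aecCl (hN : AdmitsInter K N) (hA : A ⊆ N.1) (ha : a ∈ aecCl K N A) :
    ∃ s ⊆ A, s.Finite ∧ a ∈ aecCl K N s := by
  rw [aecCl_eq_biUnion_finite (fun _ hsN _ => isStrong_aecCl hN hsN) hA, mem_iUnion₂] at ha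
  obtain ⟨s, ⟨hsA, hs⟩, has⟩ := ha
  exact ⟨s, hsA, hs, has⟩

theorem aleph0_le_LS_s17 (K : AECStr L Ω) : ℵ₀ ≤ K.LS :=
  le_add_self.trans K.LS_ge

theorem mk_le_LS_of_finite (K : AECStr L Ω) (hs : s.Finite) : #s ≤ K.LS :=
  hs.lt_aleph0.le.trans K.aleph0_le_LS_s17

theorem exists_le_mk_le_LS (hN : N ∈ K.mem) (hA : A ⊆ N.1) (hAc : #A ≤ K.LS) :
    ∃ P, K.le P N ∧ A ⊆ P.1 ∧ #P.1 ≤ K.LS := by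
  obtain ⟨P, hP, hAP, hPc⟩ := K.LST N hN A hA
  exact ⟨P, hP, hAP, hPc.trans (add_le_of_le K.aleph0_le_LS_s17 hAc le_rfl)⟩

theorem isStrong_aecCl_of_mk_le_LS (hI : ∀ N ∈ K.mem, #N.1 ≤ K.LS → AdmitsInter K N)
    (hN : N ∈ K.mem) (hA : A ⊆ N.1) (hAc : #A ≤ K.LS) : K.IsStrong N (aecCl K N A) := by
  obtain ⟨P, hP, hAP, hPc⟩ := exists_le_mk_le_LS hN hA hAc
  have hclP : K.IsStrong P (aecCl K P A) := hI P (K.le_mem_left hP) hPc A hAP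
  suffices h : aecCl K P A ⊆ aecCl K N A by
    rw [← h.antisymm (aecCl_subset_aecCl_of_le hP)]
    exact hclP.trans hP
  intro x hx M hM hAM
  obtain ⟨Q, hQM, hAQ, hQc⟩ := exists_le_mk_le_LS (K.le_mem_left hM) hAM hAc
  have hQ : K.le Q N := K.le_trans hQM hM
  obtain ⟨R, hR, hPQR, hRc⟩ := exists_le_mk_le_LS hN
    (union_subset (K.le_isSub hP).1 (K.le_isSub hQ).1)
    ((mk_union_le _ _).trans (add_le_of_le K.aleph0_le_LS_s17 hPc hQc))
  have hPR : K.le P R := K.coherence hP hR (subset_union_left.trans hPQR)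
  have hQR : K.le Q R := K.coherence hQ hR (subset_union_right.trans hPQR)
  have hclR : K.IsStrong R (aecCl K R A) :=
    hI R (K.le_mem_left hR) hRc A (hAP.trans (K.le_isSub hPR).1)
  rw [hclR.aecCl_eq_of_le hPR hAP] at hx
  exact (K.le_isSub hQM).1 (hx Q hQR hAQ)

theorem admitsInter_of_mk_le_LS (hI : ∀ N ∈ K.mem, #N.1 ≤ K.LS → AdmitsInter K N)
    (hN : N ∈ K.mem) : AdmitsInter K N :=
  admitsInter_of_finite fun _ hsN hs =>
    isStrong_aecCl_of_mk_le_LS hI hN hsN (K.mk_le_LS_of_finite hs)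

theorem exists_isStrong_mem_iff (g : P.1 ≃[L] Q.1) (hM : K.le M Q) :
    ∃ s, K.IsStrong P s ∧ ∀ y : P.1, (y : Ω) ∈ s ↔ (g y : Ω) ∈ M.1 := by
  obtain ⟨M', g', hM', hg'⟩ := K.iso_resp hM g.symm
  refine ⟨M'.1, ⟨M', hM', rfl⟩, fun y => ⟨fun hy => ?_, fun hy => ?_⟩⟩
  · obtain ⟨z, hz⟩ := g'.surjective ⟨y, hy⟩
    have hzQ : (z : Ω) ∈ Q.1 := (K.le_isSub hM).1 z.2
    have hzy : g.symm ⟨z, hzQ⟩ = y :=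
      Subtype.ext ((hg' z ⟨z, hzQ⟩ rfl).symm.trans (congrArg Subtype.val hz))
    rw [← hzy, g.apply_symm_apply]
    exact z.2
  · have hgy : (g' ⟨g y, hy⟩ : Ω) = y := by
      rw [hg' ⟨g y, hy⟩ (g y) rfl, g.symm_apply_apply]
    exact hgy ▸ (g' ⟨g y, hy⟩).2

theorem map_mem_aecCl (g : P.1 ≃[L] Q.1) (hA : A ⊆ P.1)
    (hAB : ∀ y : P.1, (y : Ω) ∈ A → (g y : Ω) ∈ B) {x : P.1} (hx : (x : Ω) ∈ aecCl K P A) :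
    (g x : Ω) ∈ aecCl K Q B := by
  intro M hM hBM
  obtain ⟨s, hs, hmem⟩ := exists_isStrong_mem_iff g hM
  exact (hmem x).1 (hs.aecCl_subset (fun y hy => (hmem ⟨y, hA hy⟩).2 (hBM (hAB _ hy))) hx)

/-- Uniqueness of the generic type over the strong submodels of a single model `N`, both
realizations being taken in `N`. -/
def UniqueGenericIn (K : AECStr L Ω) (N : ModelOn L Ω) : Prop :=
  ∀ M : ModelOn L Ω, K.le M N → ∀ a ∈ N.1 \ M.1, ∀ b ∈ N.1 \ M.1,
    ∃ P Q : ModelOn L Ω, K.le P N ∧ K.le Q N ∧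
      P.1 = aecCl K N (M.1 ∪ {a}) ∧ Q.1 = aecCl K N (M.1 ∪ {b}) ∧
      ∃ g : P.1 ≃[L] Q.1, (∀ x : P.1, (x : Ω) ∈ M.1 → (g x : Ω) = x) ∧
        ∀ x : P.1, (x : Ω) = a → (g x : Ω) = b

/-- `cl^N(s ∪ {a})` is a minimal extension of `s`: each of its points outside `s` generates `a`
over `s`. -/
def IsMinimalOver (K : AECStr L Ω) (N : ModelOn L Ω) (s : Set Ω) (a : Ω) : Prop :=
  ∀ w ∈ aecCl K N (s ∪ {a}) \ s, a ∈ aecCl K N (s ∪ {w})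

theorem exists_isMinimalOver (hN : AdmitsInter K N) (hA : A ⊆ N.1) (haN : a ∈ N.1)
    (ha : a ∉ aecCl K N A) :
    ∃ s, K.IsStrong N s ∧ A ⊆ s ∧ s ⊆ aecCl K N (A ∪ {a}) ∧ a ∉ s ∧ K.IsMinimalOver N s a := by
  obtain ⟨s, hAs, ⟨hs, hsC, has⟩, hmax⟩ := zorn_subset_nonempty
    {s | K.IsStrong N s ∧ s ⊆ aecCl K N (A ∪ {a}) ∧ a ∉ s}
    (fun c hc hchain hne => ⟨⋃₀ c,
      ⟨IsStrong.sUnion (fun s hs => (hc hs).1) hne hchain.directedOn,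
        sUnion_subset fun s hs => (hc hs).2.1, fun ⟨s, hs, has⟩ => (hc hs).2.2 has⟩,
      fun _ => subset_sUnion_of_mem⟩)
    (aecCl K N A) ⟨isStrong_aecCl hN hA, aecCl_mono subset_union_left, ha⟩
  refine ⟨s, hs, subset_aecCl.trans hAs, hsC, has, fun w hw => by_contra fun haw => hw.2 ?_⟩
  have hAa : A ∪ {a} ⊆ N.1 := union_subset hA (singleton_subset_iff.2 haN)
  have hsaC : aecCl K N (s ∪ {a}) ⊆ aecCl K N (A ∪ {a}) :=
    aecCl_union_singleton_subset hsC mem_aecCl_union_singleton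
  have hwN : w ∈ N.1 := (isStrong_aecCl hN hAa).subset (hsaC hw.1)
  have hswC : aecCl K N (s ∪ {w}) ⊆ aecCl K N (A ∪ {a}) :=
    aecCl_union_singleton_subset hsC (hsaC hw.1)
  have hswN : s ∪ {w} ⊆ N.1 := union_subset hs.subset (singleton_subset_iff.2 hwN)
  exact hmax ⟨isStrong_aecCl hN hswN, hswC, haw⟩
    subset_aecCl_union_singleton mem_aecCl_union_singleton

theorem IsMinimalOver.of_uniqueGenericIn (hmin : K.IsMinimalOver N s a) (hN : AdmitsInter K N)
    (hG : K.UniqueGenericIn N) (hs : K.IsStrong N s) (ha : a ∈ N.1 \ s) (hb : b ∈ N.1 \ s) :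
    K.IsMinimalOver N s b := by
  rintro w ⟨hw, hws⟩
  obtain ⟨M, hM, rfl⟩ := hs
  obtain ⟨P, Q, hP, hQ, hPa, hQb, g, hgM, hga⟩ := hG M hM a ha b hb
  have hMP : M.1 ⊆ P.1 := hPa ▸ subset_aecCl_union_singleton
  have hMQ : M.1 ⊆ Q.1 := hQb ▸ subset_aecCl_union_singleton
  have haP : a ∈ P.1 := hPa ▸ mem_aecCl_union_singleton
  have hwQ : w ∈ Q.1 := hQb ▸ hw
  obtain ⟨v, hv⟩ := g.surjective ⟨w, hwQ⟩
  have hgv : (g v : Ω) = w := congrArg Subtype.val hv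
  have hvM : (v : Ω) ∉ M.1 := fun h => hws (hgv ▸ (hgM v h).symm ▸ h)
  have hav : a ∈ aecCl K P (M.1 ∪ {(v : Ω)}) :=
    aecCl_subset_aecCl_of_le hP (hmin v ⟨hPa ▸ v.2, hvM⟩)
  have hbw : b ∈ aecCl K Q (M.1 ∪ {w}) := by
    rw [← hga ⟨a, haP⟩ rfl]
    refine map_mem_aecCl g (union_subset hMP (singleton_subset_iff.2 v.2)) ?_ hav
    rintro y (hy | hy)
    · exact Or.inl ((hgM y hy).symm ▸ hy)
    · exact Or.inr (Subtype.ext hy ▸ hgv)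
  have hMw : M.1 ∪ {w} ⊆ Q.1 := union_subset hMQ (singleton_subset_iff.2 hwQ)
  rwa [(isStrong_aecCl hN (hMw.trans (K.le_isSub hQ).1)).aecCl_eq_of_le hQ hMw] at hbw

theorem UniqueGenericIn.exchange (hG : K.UniqueGenericIn N) (hN : AdmitsInter K N)
    (hA : A ⊆ N.1) (haN : a ∈ N.1) (hbN : b ∈ N.1) (hab : a ∈ aecCl K N (A ∪ {b}))
    (ha : a ∉ aecCl K N A) : b ∈ aecCl K N (A ∪ {a}) := by
  by_contra hb
  obtain ⟨s, hs, hAs, hsC, has, hmin⟩ := exists_isMinimalOver hN hA haN ha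
  have hmin_b : K.IsMinimalOver N s b :=
    hmin.of_uniqueGenericIn hN hG hs ⟨haN, has⟩ ⟨hbN, fun h => hb (hsC h)⟩
  have hba : b ∈ aecCl K N (s ∪ {a}) :=
    hmin_b a ⟨aecCl_mono (union_subset_union_left _ hAs) hab, has⟩
  exact hb (aecCl_union_singleton_subset hsC mem_aecCl_union_singleton hba)

theorem exchange_of_mk_le_LS (hI : ∀ N ∈ K.mem, #N.1 ≤ K.LS → AdmitsInter K N)
    (hG : ∀ N ∈ K.mem, #N.1 ≤ K.LS → K.UniqueGenericIn N) (hN : N ∈ K.mem)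
    (hA : A ⊆ N.1) (haN : a ∈ N.1) (hbN : b ∈ N.1) (hab : a ∈ aecCl K N (A ∪ {b}))
    (ha : a ∉ aecCl K N A) : b ∈ aecCl K N (A ∪ {a}) := by
  have hNI : AdmitsInter K N := admitsInter_of_mk_le_LS hI hN
  obtain ⟨s, hsAb, hs, has⟩ :=
    exists_finite_mem_aecCl hNI (union_subset hA (singleton_subset_iff.2 hbN)) hab
  let F : Set Ω := s ∩ A
  have hFA : F ⊆ A := inter_subset_right
  have hF : F.Finite := hs.inter_of_left A
  have hsF : s ⊆ F ∪ {b} := fun x hx => (hsAb hx).imp_left fun hxA => ⟨hx, hxA⟩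
  obtain ⟨P, hP, hFabP, hPc⟩ := exists_le_mk_le_LS (A := F ∪ {a, b}) hN
    (union_subset (hFA.trans hA) (pair_subset haN hbN))
    (K.mk_le_LS_of_finite (hF.union (toFinite _)))
  obtain ⟨hFP, haP, hbP⟩ : F ⊆ P.1 ∧ a ∈ P.1 ∧ b ∈ P.1 := by
    simpa only [union_subset_iff, pair_subset_iff] using hFabP
  have hcl : ∀ B ⊆ P.1, aecCl K P B = aecCl K N B := fun B hB =>
    (isStrong_aecCl hNI (hB.trans (K.le_isSub hP).1)).aecCl_eq_of_le hP hB
  have hPmem : P ∈ K.mem := K.le_mem_left hP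
  have hba : b ∈ aecCl K P (F ∪ {a}) := by
    refine (hG P hPmem hPc).exchange (hI P hPmem hPc) hFP haP hbP ?_ ?_
    · rw [hcl _ (union_subset hFP (singleton_subset_iff.2 hbP))]
      exact aecCl_mono hsF has
    · rw [hcl F hFP]
      exact fun h => ha (aecCl_mono hFA h)
  rw [hcl _ (union_subset hFP (singleton_subset_iff.2 haP))] at hba
  exact aecCl_mono (union_subset_union_left _ hFA) hba

end AECStr

theorem stmt17_general (K : AECStr L Ω) (hI : ∀ N ∈ K.mem, #N.1 ≤ K.LS → AdmitsInter K N)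
    (hG : ∀ N ∈ K.mem, #N.1 ≤ K.LS → K.UniqueGenericIn N) :
    (∀ N ∈ K.mem, AdmitsInter K N) ∧
    ∀ N ∈ K.mem,
      (∀ A : Set Ω, A ⊆ N.1 → A ⊆ aecCl K N A) ∧
      (∀ A B : Set Ω, A ⊆ N.1 → B ⊆ N.1 →
        A ⊆ aecCl K N B → aecCl K N A ⊆ aecCl K N B) ∧
      (∀ A : Set Ω, A ⊆ N.1 → ∀ a ∈ aecCl K N A,
        ∃ A₀ : Set Ω, A₀ ⊆ A ∧ A₀.Finite ∧ a ∈ aecCl K N A₀) ∧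
      (∀ A : Set Ω, A ⊆ N.1 → ∀ a b : Ω, a ∈ N.1 → b ∈ N.1 →
        a ∈ aecCl K N (A ∪ {b}) → a ∉ aecCl K N A → b ∈ aecCl K N (A ∪ {a})) ∧
      (∀ A : Set Ω, A ⊆ N.1 →
        (aecCl K N A = A ↔ ∃ M : ModelOn L Ω, K.le M N ∧ M.1 = A)) := by
  have hadm : ∀ N ∈ K.mem, AdmitsInter K N := fun N hN => AECStr.admitsInter_of_mk_le_LS hI hN
  refine ⟨hadm, fun N hN => ⟨fun A _ => AECStr.subset_aecCl,
    fun A B _ _ => AECStr.aecCl_subset_aecCl,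
    fun A hA a ha => AECStr.exists_finite_mem_aecCl (hadm N hN) hA ha,
    fun A hA a b ha hb => AECStr.exchange_of_mk_le_LS hI hG hN hA ha hb,
    fun A hA => ⟨fun hcl => ?_, AECStr.IsStrong.aecCl_eq⟩⟩⟩
  have hstrong := hadm N hN A hA
  rwa [hcl] at hstrong

/-- In a quasiminimal AEC every model admits intersections, and for every
`N ∈ K` the pair `(|N|, cl^N)` is a pregeometry (a closure space with finite
character and exchange) whose closed sets are exactly the universes of the
`M ≤ₖ N`. -/
theorem stmt17 (K : AECStr L Ω) (hK : IsQuasiminimal K) :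
    (∀ N ∈ K.mem, AdmitsInter K N) ∧
    ∀ N ∈ K.mem,
      (∀ A : Set Ω, A ⊆ N.1 → A ⊆ aecCl K N A) ∧
      (∀ A B : Set Ω, A ⊆ N.1 → B ⊆ N.1 →
        A ⊆ aecCl K N B → aecCl K N A ⊆ aecCl K N B) ∧
      (∀ A : Set Ω, A ⊆ N.1 → ∀ a ∈ aecCl K N A,
        ∃ A₀ : Set Ω, A₀ ⊆ A ∧ A₀.Finite ∧ a ∈ aecCl K N A₀) ∧
      (∀ A : Set Ω, A ⊆ N.1 → ∀ a b : Ω, a ∈ N.1 → b ∈ N.1 →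
        a ∈ aecCl K N (A ∪ {b}) → a ∉ aecCl K N A → b ∈ aecCl K N (A ∪ {a})) ∧
      (∀ A : Set Ω, A ⊆ N.1 →
        (aecCl K N A = A ↔ ∃ M : ModelOn L Ω, K.le M N ∧ M.1 = A)) := by
  obtain ⟨hLS, -, hI, hG⟩ := hK
  exact stmt17_general K (hLS ▸ hI) fun N _ hN M hM a ha b hb =>
    hG M N N hM hM (hLS ▸ hN) (hLS ▸ hN) a b ha hb
end
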